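/- There exists an absolute constant C > 0 such that the following holds. Let n be a positive integer, let P ⊂ ℝⁿ be a convex polytope containing r·B_n for some r > 0, with facet set 𝓕 satisfying log|𝓕| < n/4. Then M(P) := ∫_{S^{n-1}} ‖θ‖_P dσ(θ) ≤ C·(1/r)·√(log|𝓕| / n), where ‖x‖_P = inf{t > 0 : x ∈ t·P} is the gauge (Minkowski) functional of P and σ is the rotation-invariant probability measure on the unit sphere S^{n-1}. -/

import Mathlib

open Set Metric MeasureTheory

/-- `F` is a `k`-dimensional face of the convex set `P`: a nonempty convex
extreme subset of `P` whose affine hull has dimension `k`. -/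
def IsFaceOfDim {n : ℕ} (P F : Set (EuclideanSpace ℝ (Fin n))) (k : ℕ) : Prop :=
  F.Nonempty ∧ Convex ℝ F ∧ IsExtreme ℝ P F ∧ Module.finrank ℝ (vectorSpan ℝ F) = k

/-!
The gauge of `P` at `θ` is the maximum of `⟪θ, u⟫` over the polar of `P`, hence is attained at one
of its extreme points `u`. The map `u ↦ {x ∈ P | ⟪x, u⟫ = 1}` sends these injectively to facets of
`P`, and `‖u‖ ≤ 1 / r` because `P` contains the ball of radius `r`. So the gauge is bounded by the
maximum of at most `|𝓕|` linear functionals. On the sphere the functional of `u` is sub-Gaussian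
with variance proxy `‖u‖ ^ 2 / n`, and the mean of the maximum of `N` sub-Gaussian variables of
variance proxy `c` is at most `√(2 * c * log N)`.
-/

open scoped RealInnerProductSpace NNReal
open Module ProbabilityTheory

section ExtremeSets

variable {E : Type*} [AddCommGroup E] [Module ℝ E]

lemma eq_convexHull_inter_of_isExtreme {S F : Set E} (hF : Convex ℝ F)
    (hext : IsExtreme ℝ (convexHull ℝ S) F) : F = convexHull ℝ (S ∩ F) := by
  refine Subset.antisymm (fun x hx => ?_) (convexHull_min inter_subset_right hF)
  have hdiff : convexHull ℝ (S \ F) ⊆ convexHull ℝ S \ F :=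
    convexHull_min (sdiff_subset_sdiff_left (subset_convexHull ℝ S))
      (hext.convex_sdiff (convex_convexHull ℝ S))
  have hxS := hext.subset hx
  rcases (S \ F).eq_empty_or_nonempty with hSF | hne_diff
  · rwa [inter_eq_left.2 (sdiff_eq_empty.1 hSF)]
  rcases (S ∩ F).eq_empty_or_nonempty with hSF | hne_inter
  · rw [sdiff_eq_left.2 (disjoint_iff_inter_eq_empty.2 hSF)] at hdiff
    exact absurd hx (hdiff hxS).2
  rw [← inter_union_sdiff S F, convexHull_union hne_inter hne_diff, mem_convexJoin] at hxS
  obtain ⟨a, ha, b, hb, hab⟩ := hxS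
  obtain ⟨hbS, hbF⟩ := hdiff hb
  rw [← insert_endpoints_openSegment] at hab
  rcases hab with rfl | rfl | hab
  · exact ha
  · exact absurd hx hbF
  · exact absurd (hext.right_mem_of_mem_openSegment
      (convexHull_mono inter_subset_left ha) hbS hx hab) hbF

lemma finite_setOf_convex_isExtreme_convexHull {S : Set E} (hS : S.Finite) :
    {F : Set E | Convex ℝ F ∧ IsExtreme ℝ (convexHull ℝ S) F}.Finite := by
  refine (hS.finite_subsets.image (convexHull ℝ)).subset ?_
  rintro F ⟨hF, hext⟩
  exact ⟨S ∩ F, inter_subset_left, (eq_convexHull_inter_of_isExtreme hF hext).symm⟩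

lemma exists_mem_extremePoints_forall_le [TopologicalSpace E] [T2Space E]
    [IsTopologicalAddGroup E] [ContinuousSMul ℝ E] [LocallyConvexSpace ℝ E] {K : Set E}
    (hK : IsCompact K) (hne : K.Nonempty) (l : StrongDual ℝ E) :
    ∃ u ∈ K.extremePoints ℝ, ∀ w ∈ K, l w ≤ l u := by
  have hexp : IsExposed ℝ K (l.toExposed K) := ContinuousLinearMap.toExposed.isExposed
  obtain ⟨m, hm, hmax⟩ := hK.exists_isMaxOn hne l.continuous.continuousOn
  obtain ⟨u, hu⟩ := (hexp.isCompact hK).extremePoints_nonempty ⟨m, hm, fun _ hy => hmax hy⟩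
  exact ⟨u, hexp.isExtreme.extremePoints_subset_extremePoints hu, hu.1.2⟩

end ExtremeSets

section Polar

variable {E : Type*} [NormedAddCommGroup E] [InnerProductSpace ℝ E]

/-- The polar of a set in the one-sided sense of convex geometry; `LinearMap.polar` bounds the
absolute value of the pairing instead. -/
def polarSet (A : Set E) : Set E := {u | ∀ x ∈ A, ⟪x, u⟫ ≤ 1}

lemma zero_mem_polarSet (A : Set E) : 0 ∈ polarSet A := fun x _ => by simp

lemma polarSet_convexHull (A : Set E) : polarSet (convexHull ℝ A) = polarSet A := by
  ext u
  have hconv : Convex ℝ {x : E | ⟪x, u⟫ ≤ 1} := by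
    simpa only [innerₛₗ_apply_apply, real_inner_comm] using
      convex_halfSpace_le (innerₛₗ ℝ u).isLinear 1
  exact hconv.convexHull_subset_iff

lemma isClosed_polarSet (A : Set E) : IsClosed (polarSet A) := by
  have : polarSet A = ⋂ x ∈ A, {u | ⟪x, u⟫ ≤ 1} := by ext; simp [polarSet]
  rw [this]
  exact isClosed_biInter fun x _ => isClosed_le (by fun_prop) continuous_const

lemma norm_le_of_mem_polarSet {A : Set E} {r : ℝ} (hr : 0 < r) (hA : closedBall 0 r ⊆ A)
    {u : E} (hu : u ∈ polarSet A) : ‖u‖ ≤ 1 / r := by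
  rcases eq_or_ne u 0 with rfl | hu0
  · simp [hr.le]
  have hpos : 0 < ‖u‖ := norm_pos_iff.2 hu0
  have hmem : (r / ‖u‖) • u ∈ closedBall (0 : E) r := by
    rw [mem_closedBall_zero_iff, norm_smul, Real.norm_of_nonneg (by positivity),
      div_mul_cancel₀ r hpos.ne']
  have h := hu _ (hA hmem)
  rw [real_inner_smul_left, real_inner_self_eq_norm_sq] at h
  rw [le_div_iff₀ hr]
  calc ‖u‖ * r = r / ‖u‖ * ‖u‖ ^ 2 := by field_simp
    _ ≤ 1 := h

lemma isCompact_polarSet [FiniteDimensional ℝ E] {A : Set E} {r : ℝ} (hr : 0 < r)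
    (hA : closedBall 0 r ⊆ A) : IsCompact (polarSet A) :=
  (isCompact_closedBall (0 : E) (1 / r)).of_isClosed_subset (isClosed_polarSet A)
    fun _ hu => mem_closedBall_zero_iff.2 (norm_le_of_mem_polarSet hr hA hu)

lemma polarSet_polarSet [CompleteSpace E] {P : Set E} (hP : Convex ℝ P) (hclosed : IsClosed P)
    (h0 : 0 ∈ P) : polarSet (polarSet P) = P := by
  refine Subset.antisymm (fun x hx => ?_) fun x hx u hu => real_inner_comm u x ▸ hu x hx
  by_contra hxP
  obtain ⟨f, c, hfc, hcx⟩ := geometric_hahn_banach_closed_point hP hclosed hxP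
  have hc : 0 < c := by simpa using hfc 0 h0
  obtain ⟨w, rfl⟩ := (InnerProductSpace.toDual ℝ E).surjective f
  simp only [InnerProductSpace.toDual_apply_apply] at hfc hcx
  have hw : c⁻¹ • w ∈ polarSet P := fun y hy => by
    rw [real_inner_smul_right, real_inner_comm, inv_mul_le_one₀ hc]
    exact (hfc y hy).le
  have h := hx _ hw
  rw [real_inner_smul_left, inv_mul_le_one₀ hc] at h
  exact h.not_gt hcx

lemma gauge_le_of_forall_mem_polarSet_inner_le [CompleteSpace E] {P : Set E} (hP : Convex ℝ P)
    (hclosed : IsClosed P) (h0 : 0 ∈ P) {x : E} {a : ℝ} (ha : ∀ u ∈ polarSet P, ⟪x, u⟫ ≤ a) :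
    gauge P x ≤ a := by
  have ha0 : 0 ≤ a := by simpa using ha 0 (zero_mem_polarSet P)
  refine le_of_forall_gt_imp_ge_of_dense fun t hat => ?_
  have ht : 0 < t := ha0.trans_lt hat
  refine gauge_le_of_mem ht.le ((mem_smul_set_iff_inv_smul_mem₀ ht.ne' P x).2 ?_)
  rw [← polarSet_polarSet hP hclosed h0]
  intro u hu
  rw [real_inner_smul_right, real_inner_comm, inv_mul_le_one₀ ht]
  exact (ha u hu).trans hat.le

lemma exists_mem_extremePoints_polarSet_gauge_le [FiniteDimensional ℝ E] {P : Set E}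
    (hP : Convex ℝ P) (hclosed : IsClosed P) {r : ℝ} (hr : 0 < r) (hball : closedBall 0 r ⊆ P)
    (x : E) : ∃ u ∈ (polarSet P).extremePoints ℝ, gauge P x ≤ ⟪x, u⟫ := by
  obtain ⟨u, hu, hmax⟩ := exists_mem_extremePoints_forall_le (isCompact_polarSet hr hball)
    ⟨0, zero_mem_polarSet P⟩ (innerSL ℝ x)
  exact ⟨u, hu, gauge_le_of_forall_mem_polarSet_inner_le hP hclosed
    (hball (mem_closedBall_self hr.le)) hmax⟩

end Polar

section Facets

variable {E : Type*} [NormedAddCommGroup E] [InnerProductSpace ℝ E]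

/-- The facets of a convex set: its nonempty convex extreme subsets whose affine hull has
codimension one. In dimension zero the truncated subtraction makes a point a facet of itself. -/
def facets (P : Set E) : Set (Set E) :=
  {F | F.Nonempty ∧ Convex ℝ F ∧ IsExtreme ℝ P F ∧ finrank ℝ (vectorSpan ℝ F) = finrank ℝ E - 1}

/-- The part of `P` on the hyperplane dual to `u`, that is, the face of `P` which corresponds by
polarity to the point `u` of `polarSet P`. -/
def dualFace (P : Set E) (u : E) : Set E := {x ∈ P | ⟪x, u⟫ = 1}

lemma isExposed_dualFace {P : Set E} {u : E} (hu : u ∈ polarSet P) :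
    IsExposed ℝ P (dualFace P u) := by
  rintro ⟨x₀, hx₀P, hx₀⟩
  refine ⟨innerSL ℝ u, ?_⟩
  ext x
  simp only [dualFace, innerSL_apply_apply, real_inner_comm _ u, mem_ofPred_eq]
  refine and_congr_right fun hx => ⟨fun hx1 y hy => hx1 ▸ hu y hy, fun hmax => ?_⟩
  exact (hu x hx).antisymm (hx₀ ▸ hmax x₀ hx₀P)

lemma finite_facets_convexHull {S : Set E} (hS : S.Finite) : (facets (convexHull ℝ S)).Finite :=
  (finite_setOf_convex_isExtreme_convexHull hS).subset fun _ hF => ⟨hF.2.1, hF.2.2.1⟩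

lemma eventually_add_smul_mem_polarSet {S : Set E} (hS : S.Finite) {u v : E}
    (hu : u ∈ polarSet S) (hv : ∀ s ∈ dualFace S u, ⟪s, v⟫ = 0) :
    ∀ᶠ t : ℝ in nhds 0, u + t • v ∈ polarSet S := by
  refine (Filter.eventually_all_finite hS).2 fun s hs => ?_
  rcases (hu s hs).eq_or_lt with htight | hslack
  · refine Filter.Eventually.of_forall fun t => ?_
    rw [inner_add_right, real_inner_smul_right, hv s ⟨hs, htight⟩, htight, mul_zero, add_zero]
  · have hcont : Continuous fun t : ℝ => ⟪s, u + t • v⟫ := by fun_prop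
    exact (hcont.continuousAt.eventually_lt continuousAt_const (by simpa using hslack)).mono
      fun _ h => h.le

/-- A direction orthogonal to the dual face would let `u` move both ways inside the polar. -/
lemma span_dualFace_eq_top [FiniteDimensional ℝ E] {S : Set E} (hS : S.Finite) {u : E}
    (hu : u ∈ (polarSet S).extremePoints ℝ) : Submodule.span ℝ (dualFace S u) = ⊤ := by
  rw [← Submodule.orthogonal_eq_bot_iff, Submodule.eq_bot_iff]
  intro v hv
  have hv0 : ∀ s ∈ dualFace S u, ⟪s, v⟫ = 0 := fun s hs =>
    (Submodule.mem_orthogonal _ v).1 hv s (Submodule.subset_span hs)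
  have hnear := (eventually_add_smul_mem_polarSet hS hu.1 hv0).and
    (eventually_add_smul_mem_polarSet hS hu.1 (v := -v) fun s hs => by
      rw [inner_neg_right, hv0 s hs, neg_zero])
  obtain ⟨t, ⟨hplus, hminus⟩, ht⟩ :=
    ((hnear.filter_mono nhdsWithin_le_nhds).and (self_mem_nhdsWithin (s := {0}ᶜ))).exists
  have hmid : u ∈ openSegment ℝ (u + t • v) (u + t • -v) :=
    ⟨1 / 2, 1 / 2, by norm_num, by norm_num, by norm_num, by module⟩
  have htv : t • v = 0 := by simpa using hu.2 hplus hminus hmid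
  exact (smul_eq_zero.1 htv).resolve_left ht

lemma span_dualFace_convexHull_eq_top [FiniteDimensional ℝ E] {S : Set E} (hS : S.Finite) {u : E}
    (hu : u ∈ (polarSet (convexHull ℝ S)).extremePoints ℝ) :
    Submodule.span ℝ (dualFace (convexHull ℝ S) u) = ⊤ := by
  rw [polarSet_convexHull] at hu
  rw [eq_top_iff, ← span_dualFace_eq_top hS hu]
  exact Submodule.span_mono fun s hs => ⟨subset_convexHull ℝ S hs.1, hs.2⟩

lemma dualFace_nonempty_of_span_eq_top [Nontrivial E] {P : Set E} {u : E}
    (hspan : Submodule.span ℝ (dualFace P u) = ⊤) : (dualFace P u).Nonempty := by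
  by_contra! hempty
  rw [hempty, Submodule.span_empty] at hspan
  exact bot_ne_top hspan

lemma eq_of_dualFace_eq_of_span_eq_top {P : Set E} {u w : E}
    (hspan : Submodule.span ℝ (dualFace P u) = ⊤) (h : dualFace P u = dualFace P w) : u = w := by
  have hortho : Submodule.span ℝ (dualFace P u) ⟂ Submodule.span ℝ {u - w} := by
    refine Submodule.isOrtho_span.2 fun x hx y hy => ?_
    have hxw : x ∈ dualFace P w := h ▸ hx
    rw [mem_singleton_iff.1 hy, inner_sub_right, hx.2, hxw.2, sub_self]
  rw [hspan, Submodule.isOrtho_top_left, Submodule.span_singleton_eq_bot] at hortho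
  exact sub_eq_zero.1 hortho

lemma vectorSpan_dualFace_of_span_eq_top {P : Set E} {u x₀ : E} (hx₀ : x₀ ∈ dualFace P u)
    (hspan : Submodule.span ℝ (dualFace P u) = ⊤) : vectorSpan ℝ (dualFace P u) = (ℝ ∙ u)ᗮ := by
  refine le_antisymm ?_ fun w hw => ?_
  · rw [vectorSpan_def, Submodule.span_le]
    rintro _ ⟨x, hx, y, hy, rfl⟩
    rw [SetLike.mem_coe, Submodule.mem_orthogonal_singleton_iff_inner_left]
    simp [inner_sub_left, hx.2, hy.2]
  · -- This map sends `dualFace P u` into its vector span and is the identity on `(ℝ ∙ u)ᗮ`.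
    let L : E →ₗ[ℝ] E := LinearMap.id - (innerₛₗ ℝ u).smulRight x₀
    have hL : Submodule.span ℝ (dualFace P u) ≤ (vectorSpan ℝ (dualFace P u)).comap L := by
      refine Submodule.span_le.2 fun x hx => ?_
      simpa [L, real_inner_comm x u, hx.2] using vsub_mem_vectorSpan ℝ hx hx₀
    have hLw : L w ∈ vectorSpan ℝ (dualFace P u) := hL (hspan ▸ Submodule.mem_top)
    simpa [L, Submodule.mem_orthogonal_singleton_iff_inner_right.1 hw] using hLw

lemma finrank_vectorSpan_dualFace_of_span_eq_top [FiniteDimensional ℝ E] {P : Set E} {u x₀ : E}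
    (hx₀ : x₀ ∈ dualFace P u) (hspan : Submodule.span ℝ (dualFace P u) = ⊤) :
    finrank ℝ (vectorSpan ℝ (dualFace P u)) = finrank ℝ E - 1 := by
  have hu0 : u ≠ 0 := by
    rintro rfl
    simpa using hx₀.2
  rw [vectorSpan_dualFace_of_span_eq_top hx₀ hspan,
    ← (ℝ ∙ u).finrank_add_finrank_orthogonal, finrank_span_singleton hu0, Nat.add_sub_cancel_left]

lemma dualFace_mem_facets [FiniteDimensional ℝ E] [Nontrivial E] {S : Set E} (hS : S.Finite)
    {u : E} (hu : u ∈ (polarSet (convexHull ℝ S)).extremePoints ℝ) :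
    dualFace (convexHull ℝ S) u ∈ facets (convexHull ℝ S) := by
  have hspan := span_dualFace_convexHull_eq_top hS hu
  have hexp := isExposed_dualFace hu.1
  obtain ⟨x₀, hx₀⟩ := dualFace_nonempty_of_span_eq_top hspan
  exact ⟨⟨x₀, hx₀⟩, hexp.convex (convex_convexHull ℝ S), hexp.isExtreme,
    finrank_vectorSpan_dualFace_of_span_eq_top hx₀ hspan⟩

lemma injOn_dualFace_extremePoints_polarSet [FiniteDimensional ℝ E] {S : Set E} (hS : S.Finite) :
    InjOn (dualFace (convexHull ℝ S)) ((polarSet (convexHull ℝ S)).extremePoints ℝ) :=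
  fun _ hu _ _ h => eq_of_dualFace_eq_of_span_eq_top (span_dualFace_convexHull_eq_top hS hu) h

lemma finite_extremePoints_polarSet_convexHull [FiniteDimensional ℝ E] [Nontrivial E] {S : Set E}
    (hS : S.Finite) : ((polarSet (convexHull ℝ S)).extremePoints ℝ).Finite :=
  Finite.of_injOn (fun _ => dualFace_mem_facets hS) (injOn_dualFace_extremePoints_polarSet hS)
    (finite_facets_convexHull hS)

lemma ncard_extremePoints_polarSet_convexHull_le [FiniteDimensional ℝ E] [Nontrivial E]
    {S : Set E} (hS : S.Finite) :
    ((polarSet (convexHull ℝ S)).extremePoints ℝ).ncard ≤ (facets (convexHull ℝ S)).ncard :=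
  ncard_le_ncard_of_injOn _ (fun _ => dualFace_mem_facets hS)
    (injOn_dualFace_extremePoints_polarSet hS) (finite_facets_convexHull hS)

end Facets

section MaximalInequality

variable {Ω : Type*} [MeasurableSpace Ω] {μ : Measure Ω}

lemma hasSubgaussianMGF_mono {X : Ω → ℝ} {c c' : ℝ≥0} (hX : HasSubgaussianMGF X c μ)
    (hc : c ≤ c') : HasSubgaussianMGF X c' μ where
  integrable_exp_mul := hX.integrable_exp_mul
  mgf_le t := (hX.mgf_le t).trans (by gcongr)

variable [IsProbabilityMeasure μ]

lemma exp_integral_le_integral_of_exp_le {f Y : Ω → ℝ} (hf : Integrable f μ)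
    (hY : Integrable Y μ) (hfY : ∀ᵐ ω ∂μ, Real.exp (f ω) ≤ Y ω) :
    Real.exp (∫ ω, f ω ∂μ) ≤ ∫ ω, Y ω ∂μ := by
  have hexp : Integrable (fun ω => Real.exp (f ω)) μ :=
    hY.mono' (Real.continuous_exp.comp_aestronglyMeasurable hf.1)
      (hfY.mono fun ω h => by rwa [Real.norm_of_nonneg (Real.exp_nonneg _)])
  calc Real.exp (∫ ω, f ω ∂μ) ≤ ∫ ω, Real.exp (f ω) ∂μ :=
        convexOn_exp.map_integral_le Real.continuous_exp.continuousOn isClosed_univ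
          (Filter.Eventually.of_forall fun _ => mem_univ _) hf hexp
    _ ≤ ∫ ω, Y ω ∂μ := integral_mono_ae hexp hY hfY

variable {ι : Type*} {s : Finset ι} {X : ι → Ω → ℝ} {c : ℝ≥0} {g : Ω → ℝ}

lemma mul_integral_le_log_card_add (hX : ∀ i ∈ s, HasSubgaussianMGF (X i) c μ)
    (hg : Integrable g μ) (hgX : ∀ᵐ ω ∂μ, ∃ i ∈ s, g ω ≤ X i ω) {t : ℝ} (ht : 0 ≤ t) :
    t * ∫ ω, g ω ∂μ ≤ Real.log s.card + c * t ^ 2 / 2 := by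
  have hcard : (s.card : ℝ) ≠ 0 := by
    obtain ⟨_, i, hi, _⟩ := hgX.exists
    exact_mod_cast (Finset.card_pos.2 ⟨i, hi⟩).ne'
  have hexp_le : ∀ᵐ ω ∂μ, Real.exp (t * g ω) ≤ ∑ i ∈ s, Real.exp (t * X i ω) := by
    filter_upwards [hgX] with ω ⟨i, hi, hgi⟩
    calc Real.exp (t * g ω) ≤ Real.exp (t * X i ω) := by gcongr
      _ ≤ ∑ i ∈ s, Real.exp (t * X i ω) :=
          Finset.single_le_sum (f := fun i => Real.exp (t * X i ω))
            (fun _ _ => Real.exp_nonneg _) hi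
  have hexp_integral : Real.exp (t * ∫ ω, g ω ∂μ) ≤ s.card * Real.exp (c * t ^ 2 / 2) := by
    calc Real.exp (t * ∫ ω, g ω ∂μ) = Real.exp (∫ ω, t * g ω ∂μ) := by rw [integral_const_mul]
      _ ≤ ∫ ω, ∑ i ∈ s, Real.exp (t * X i ω) ∂μ :=
          exp_integral_le_integral_of_exp_le (hg.const_mul t)
            (integrable_finsetSum s fun i hi => (hX i hi).integrable_exp_mul t) hexp_le
      _ = ∑ i ∈ s, mgf (X i) μ t :=
          integral_finsetSum s fun i hi => (hX i hi).integrable_exp_mul t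
      _ ≤ ∑ i ∈ s, Real.exp (c * t ^ 2 / 2) := Finset.sum_le_sum fun i hi => (hX i hi).mgf_le t
      _ = s.card * Real.exp (c * t ^ 2 / 2) := by rw [Finset.sum_const, nsmul_eq_mul]
  rw [← Real.log_exp (c * t ^ 2 / 2), ← Real.log_mul hcard (Real.exp_ne_zero _)]
  exact (Real.le_log_iff_exp_le (by positivity)).2 hexp_integral

lemma le_sqrt_of_forall_mul_le_add {m L c : ℝ} (hL : 0 ≤ L) (hc : 0 ≤ c)
    (h : ∀ t : ℝ, 0 ≤ t → t * m ≤ L + c * t ^ 2 / 2) : m ≤ √(2 * c * L) := by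
  rcases le_or_gt m 0 with hm | hm
  · exact hm.trans (Real.sqrt_nonneg _)
  have hquad : ∀ t : ℝ, 0 ≤ c / 2 * (t * t) + -m * t + L := fun t => by
    rcases le_or_gt 0 t with ht | ht
    · linarith [h t ht]
    · have hlin : 0 ≤ -m * t := mul_nonneg_of_nonpos_of_nonpos (neg_nonpos.2 hm.le) ht.le
      have hsq : 0 ≤ c / 2 * (t * t) := mul_nonneg (by positivity) (mul_self_nonneg t)
      linarith
  have hdiscrim := discrim_le_zero hquad
  rw [discrim] at hdiscrim
  exact Real.le_sqrt_of_sq_le (by linarith)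

lemma integral_le_sqrt_of_hasSubgaussianMGF (hX : ∀ i ∈ s, HasSubgaussianMGF (X i) c μ)
    (hg : Integrable g μ) (hgX : ∀ᵐ ω ∂μ, ∃ i ∈ s, g ω ≤ X i ω) :
    ∫ ω, g ω ∂μ ≤ √(2 * c * Real.log s.card) :=
  le_sqrt_of_forall_mul_le_add (Real.log_natCast_nonneg _) c.2 fun _ =>
    mul_integral_le_log_card_add hX hg hgX

end MaximalInequality

section SignVectors

variable {ι E : Type*} [Fintype ι] [NormedAddCommGroup E] [InnerProductSpace ℝ E]

/-- The vector with coordinates `ε i = ±1` in the orthonormal basis `e`, i.e. a vertex of the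
cube. Signs are encoded as units of `ℤ`. -/
noncomputable def signVector (e : OrthonormalBasis ι ℝ E) (ε : ι → ℤˣ) : E :=
  ∑ i, ((ε i : ℤ) : ℝ) • e i

lemma norm_signVector (e : OrthonormalBasis ι ℝ E) (ε : ι → ℤˣ) :
    ‖signVector e ε‖ = √(Fintype.card ι) := by
  have hsq : ∀ i, ((ε i : ℤ) : ℝ) * ((ε i : ℤ) : ℝ) = 1 := fun i => by
    exact_mod_cast Int.units_coe_mul_self (ε i)
  rw [norm_eq_sqrt_real_inner, signVector, e.orthonormal.inner_sum]
  simp [hsq]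

lemma sum_exp_inner_signVector [DecidableEq ι] (e : OrthonormalBasis ι ℝ E) (x : E) :
    ∑ ε, Real.exp ⟪x, signVector e ε⟫ = ∏ i, 2 * Real.cosh ⟪x, e i⟫ := by
  calc ∑ ε, Real.exp ⟪x, signVector e ε⟫
      = ∑ ε : ι → ℤˣ, ∏ i, Real.exp (((ε i : ℤ) : ℝ) * ⟪x, e i⟫) := by
        simp only [signVector, inner_sum, real_inner_smul_right, Real.exp_sum]
    _ = ∏ i, ∑ δ : ℤˣ, Real.exp (((δ : ℤ) : ℝ) * ⟪x, e i⟫) :=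
        (Fintype.prod_sum fun i (δ : ℤˣ) => Real.exp (((δ : ℤ) : ℝ) * ⟪x, e i⟫)).symm
    _ = ∏ i, 2 * Real.cosh ⟪x, e i⟫ := by
        refine Finset.prod_congr rfl fun i _ => ?_
        rw [UnitsInt.univ, Finset.sum_pair (by decide), Real.cosh_eq]
        simp [mul_div_cancel₀]

lemma sum_exp_inner_signVector_le [DecidableEq ι] (e : OrthonormalBasis ι ℝ E) (x : E) :
    ∑ ε, Real.exp ⟪x, signVector e ε⟫ ≤ 2 ^ Fintype.card ι * Real.exp (‖x‖ ^ 2 / 2) := by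
  calc ∑ ε, Real.exp ⟪x, signVector e ε⟫ = ∏ i, 2 * Real.cosh ⟪x, e i⟫ :=
        sum_exp_inner_signVector e x
    _ ≤ ∏ i, 2 * Real.exp (⟪x, e i⟫ ^ 2 / 2) := by
        gcongr with i
        exact Real.cosh_le_exp_half_sq _
    _ = 2 ^ Fintype.card ι * Real.exp (‖x‖ ^ 2 / 2) := by
        rw [Finset.prod_mul_distrib, Finset.prod_const, Finset.card_univ, ← Real.exp_sum,
          ← Finset.sum_div, ← e.sum_sq_inner_left]

end SignVectors

section InvariantMeasure

lemma integrable_of_continuous_of_ae_norm_le {E : Type*} [NormedAddCommGroup E] [ProperSpace E]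
    [MeasurableSpace E] [BorelSpace E] {μ : Measure E} [IsFiniteMeasure μ] {R : ℝ}
    (hμ : ∀ᵐ x ∂μ, ‖x‖ ≤ R) {f : E → ℝ} (hf : Continuous f) : Integrable f μ := by
  have hball : ∀ᵐ x ∂μ, x ∈ closedBall (0 : E) R := by simpa only [mem_closedBall_zero_iff]
  rw [← Measure.restrict_eq_self_of_ae_mem hball]
  exact hf.continuousOn.integrableOn_compact (isCompact_closedBall 0 R)


variable {E : Type*} [NormedAddCommGroup E] [InnerProductSpace ℝ E] [MeasurableSpace E]
  [BorelSpace E] {σ : Measure E}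

lemma integral_comp_inner_eq_of_norm_eq {F : Type*} [NormedAddCommGroup F] [NormedSpace ℝ F]
    (hinv : ∀ T : E ≃ₗᵢ[ℝ] E, σ.map T = σ) (φ : ℝ → F) {v w : E} (h : ‖v‖ = ‖w‖) :
    ∫ θ, φ ⟪θ, v⟫ ∂σ = ∫ θ, φ ⟪θ, w⟫ ∂σ := by
  let T := (ℝ ∙ (v - w))ᗮ.reflection
  have hT : T v = w := Submodule.reflection_sub h
  have hpres : MeasurePreserving T σ σ := ⟨T.continuous.measurable, hinv T⟩
  rw [← hpres.integral_comp (g := fun θ => φ ⟪θ, w⟫) T.toHomeomorph.measurableEmbedding]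
  have hinner : ∀ θ, ⟪T θ, w⟫ = ⟪θ, v⟫ := fun θ => by rw [← hT, T.inner_map_map]
  simp only [hinner]

variable [FiniteDimensional ℝ E] [IsProbabilityMeasure σ]

lemma sum_integral_exp_inner_smul_signVector_le {ι : Type*} [Fintype ι] [DecidableEq ι] {R : ℝ}
    (hσ : ∀ᵐ θ ∂σ, ‖θ‖ ≤ R) (e : OrthonormalBasis ι ℝ E) (b : ℝ) :
    ∑ ε, ∫ θ, Real.exp ⟪θ, b • signVector e ε⟫ ∂σ ≤
      2 ^ Fintype.card ι * Real.exp ((R * b) ^ 2 / 2) := by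
  have hint : ∀ w : E, Integrable (fun θ => Real.exp ⟪θ, w⟫) σ := fun w =>
    integrable_of_continuous_of_ae_norm_le hσ (by fun_prop)
  have hsum : ∀ᵐ θ ∂σ, ∑ ε, Real.exp ⟪θ, b • signVector e ε⟫ ≤
      2 ^ Fintype.card ι * Real.exp ((R * b) ^ 2 / 2) := by
    filter_upwards [hσ] with θ hθ
    calc ∑ ε, Real.exp ⟪θ, b • signVector e ε⟫ = ∑ ε, Real.exp ⟪b • θ, signVector e ε⟫ := by
          simp only [real_inner_smul_left, real_inner_smul_right]
      _ ≤ 2 ^ Fintype.card ι * Real.exp (‖b • θ‖ ^ 2 / 2) := sum_exp_inner_signVector_le e _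
      _ = 2 ^ Fintype.card ι * Real.exp (‖θ‖ ^ 2 * b ^ 2 / 2) := by
          rw [norm_smul, mul_pow, Real.norm_eq_abs, sq_abs, mul_comm (b ^ 2)]
      _ ≤ 2 ^ Fintype.card ι * Real.exp ((R * b) ^ 2 / 2) := by
          rw [mul_pow]
          gcongr
  calc ∑ ε, ∫ θ, Real.exp ⟪θ, b • signVector e ε⟫ ∂σ
      = ∫ θ, ∑ ε, Real.exp ⟪θ, b • signVector e ε⟫ ∂σ :=
        (integral_finsetSum _ fun ε _ => hint _).symm
    _ ≤ ∫ _, 2 ^ Fintype.card ι * Real.exp ((R * b) ^ 2 / 2) ∂σ :=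
        integral_mono_ae (integrable_finsetSum _ fun ε _ => hint _) (integrable_const _) hsum
    _ = 2 ^ Fintype.card ι * Real.exp ((R * b) ^ 2 / 2) := by simp

/-- By invariance `v` may be averaged over the vertices of a cube inscribed in the sphere of radius
`‖v‖`. -/
lemma integral_exp_inner_le_of_invariant [Nontrivial E] {R : ℝ} (hσ : ∀ᵐ θ ∂σ, ‖θ‖ ≤ R)
    (hinv : ∀ T : E ≃ₗᵢ[ℝ] E, σ.map T = σ) (v : E) :
    ∫ θ, Real.exp ⟪θ, v⟫ ∂σ ≤ Real.exp ((R * ‖v‖) ^ 2 / finrank ℝ E / 2) := by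
  let n := finrank ℝ E
  have hn : (0 : ℝ) < n := by exact_mod_cast finrank_pos
  let e := stdOrthonormalBasis ℝ E
  let b := ‖v‖ / √n
  have hnorm : ∀ ε, ‖v‖ = ‖b • signVector e ε‖ := fun ε => by
    rw [norm_smul, norm_signVector, Fintype.card_fin, Real.norm_of_nonneg (by positivity),
      div_mul_cancel₀ _ (Real.sqrt_pos.2 hn).ne']
  refine le_of_mul_le_mul_left (a := (2 : ℝ) ^ n) ?_ (by positivity)
  calc 2 ^ n * ∫ θ, Real.exp ⟪θ, v⟫ ∂σ = ∑ ε, ∫ θ, Real.exp ⟪θ, b • signVector e ε⟫ ∂σ := by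
        simp [← integral_comp_inner_eq_of_norm_eq hinv Real.exp (hnorm _), n]
    _ ≤ 2 ^ n * Real.exp ((R * b) ^ 2 / 2) := by
        simpa only [Fintype.card_fin] using sum_integral_exp_inner_smul_signVector_le hσ e b
    _ = 2 ^ n * Real.exp ((R * ‖v‖) ^ 2 / n / 2) := by
        rw [← mul_div_assoc R, div_pow, Real.sq_sqrt hn.le]

lemma hasSubgaussianMGF_inner_of_invariant [Nontrivial E] {R : ℝ≥0} (hσ : ∀ᵐ θ ∂σ, ‖θ‖ ≤ R)
    (hinv : ∀ T : E ≃ₗᵢ[ℝ] E, σ.map T = σ) (v : E) :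
    HasSubgaussianMGF (fun θ => ⟪θ, v⟫) ((R * ‖v‖₊) ^ 2 / finrank ℝ E) σ where
  integrable_exp_mul t := integrable_of_continuous_of_ae_norm_le hσ (by fun_prop)
  mgf_le t := by
    calc mgf (fun θ => ⟪θ, v⟫) σ t = ∫ θ, Real.exp ⟪θ, t • v⟫ ∂σ := by
          simp only [mgf, real_inner_smul_right]
      _ ≤ Real.exp ((R * ‖t • v‖) ^ 2 / finrank ℝ E / 2) :=
          integral_exp_inner_le_of_invariant hσ hinv _
      _ = Real.exp (((R * ‖v‖₊) ^ 2 / finrank ℝ E : ℝ≥0) * t ^ 2 / 2) := by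
          push_cast
          rw [norm_smul, mul_left_comm, mul_pow, Real.norm_eq_abs, sq_abs, mul_comm (t ^ 2),
            div_mul_eq_mul_div]

lemma integral_gauge_convexHull_le_of_invariant [Nontrivial E] {R : ℝ≥0} (hσ : ∀ᵐ θ ∂σ, ‖θ‖ ≤ R)
    (hinv : ∀ T : E ≃ₗᵢ[ℝ] E, σ.map T = σ) {S : Set E} (hS : S.Finite) {r : ℝ≥0} (hr : 0 < r)
    (hball : closedBall 0 (r : ℝ) ⊆ convexHull ℝ S) :
    ∫ θ, gauge (convexHull ℝ S) θ ∂σ ≤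
      √(2 * ((R / r) ^ 2 / finrank ℝ E) * Real.log (facets (convexHull ℝ S)).ncard) := by
  have hconv := convex_convexHull ℝ S
  have hfin := finite_extremePoints_polarSet_convexHull hS
  have hcont : Continuous (gauge (convexHull ℝ S)) :=
    continuous_gauge hconv (Filter.mem_of_superset (closedBall_mem_nhds 0 hr) hball)
  have hsub : ∀ u ∈ hfin.toFinset,
      HasSubgaussianMGF (fun θ => ⟪θ, u⟫) ((R / r) ^ 2 / finrank ℝ E) σ := fun u hu => by
    have hnorm : ‖u‖₊ ≤ 1 / r := norm_le_of_mem_polarSet hr hball (hfin.mem_toFinset.1 hu).1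
    refine hasSubgaussianMGF_mono (hasSubgaussianMGF_inner_of_invariant hσ hinv u) ?_
    rw [← mul_one_div R r]
    gcongr
  have hgauge : ∀ θ, ∃ u ∈ hfin.toFinset, gauge (convexHull ℝ S) θ ≤ ⟪θ, u⟫ := by
    simpa only [hfin.mem_toFinset] using
      exists_mem_extremePoints_polarSet_gauge_le hconv (hS.isClosed_convexHull ℝ) hr hball
  refine (integral_le_sqrt_of_hasSubgaussianMGF hsub
    (integrable_of_continuous_of_ae_norm_le hσ hcont) (Filter.Eventually.of_forall hgauge)).trans ?_
  have hcard : 0 < hfin.toFinset.card := by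
    obtain ⟨u, hu, -⟩ := hgauge 0
    exact Finset.card_pos.2 ⟨u, hu⟩
  have hcard_le : hfin.toFinset.card ≤ (facets (convexHull ℝ S)).ncard := by
    rw [← ncard_eq_toFinset_card _ hfin]
    exact ncard_extremePoints_polarSet_convexHull_le hS
  push_cast
  gcongr

end InvariantMeasure

theorem mean_gauge_of_polytope_general {E : Type*} [NormedAddCommGroup E]
    [InnerProductSpace ℝ E] [FiniteDimensional ℝ E] [MeasurableSpace E] [BorelSpace E]
    {σ : Measure E} [IsProbabilityMeasure σ] (hsphere : σ (sphere 0 1) = 1)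
    (hinv : ∀ T : E ≃ₗᵢ[ℝ] E, σ.map T = σ) {S : Set E} (hS : S.Finite) {r : ℝ} (hr : 0 < r)
    (hball : closedBall 0 r ⊆ convexHull ℝ S) :
    ∫ θ in sphere 0 1, gauge (convexHull ℝ S) θ ∂σ ≤
      √2 * (1 / r) * √(Real.log (facets (convexHull ℝ S)).ncard / finrank ℝ E) := by
  have hσ : ∀ᵐ θ ∂σ, θ ∈ sphere (0 : E) 1 :=
    (mem_ae_iff_prob_eq_one isClosed_sphere.measurableSet).2 hsphere
  obtain ⟨θ₀, hθ₀⟩ := hσ.exists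
  have : Nontrivial E := nontrivial_of_ne θ₀ 0 (ne_of_mem_sphere hθ₀ one_ne_zero)
  have hnorm : ∀ᵐ θ ∂σ, ‖θ‖ ≤ (1 : ℝ≥0) :=
    hσ.mono fun θ hθ => (mem_sphere_zero_iff_norm.1 hθ).le
  lift r to ℝ≥0 using hr.le
  rw [Measure.restrict_eq_self_of_ae_mem hσ]
  refine (integral_gauge_convexHull_le_of_invariant hnorm hinv hS hr hball).trans_eq ?_
  rw [mul_assoc, div_mul_eq_mul_div, mul_div_assoc, Real.sqrt_mul zero_le_two,
    Real.sqrt_mul (sq_nonneg _), Real.sqrt_sq (by positivity), NNReal.coe_one, mul_assoc]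

/-- There is an absolute constant `C > 0` such that for every polytope `P ⊆ ℝⁿ`
containing `r·B_n`, with facet set `𝓕` satisfying `log |𝓕| < n/4`, one has
`M(P) = ∫_{S^{n-1}} ‖θ‖_P dσ ≤ C·(1/r)·√(log |𝓕| / n)`, where `‖·‖_P` is the gauge of `P`. -/
theorem mean_gauge_of_polytope :
    ∃ C : ℝ, 0 < C ∧
      ∀ (n : ℕ), 0 < n → ∀ (r : ℝ), 0 < r →
        ∀ σ : Measure (EuclideanSpace ℝ (Fin n)), IsProbabilityMeasure σ →
          σ (sphere (0 : EuclideanSpace ℝ (Fin n)) 1) = 1 →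
          (∀ T : EuclideanSpace ℝ (Fin n) ≃ₗᵢ[ℝ] EuclideanSpace ℝ (Fin n),
            Measure.map T σ = σ) →
          ∀ S : Finset (EuclideanSpace ℝ (Fin n)),
            ∀ P : Set (EuclideanSpace ℝ (Fin n)),
              P = convexHull ℝ (S : Set (EuclideanSpace ℝ (Fin n))) →
              closedBall (0 : EuclideanSpace ℝ (Fin n)) r ⊆ P →
              Real.log (({F : Set (EuclideanSpace ℝ (Fin n)) | IsFaceOfDim P F (n - 1)}).ncard)
                  < n / 4 →
                ∫ θ in sphere (0 : EuclideanSpace ℝ (Fin n)) 1, gauge P θ ∂σ ≤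
                  C * (1 / r) *
                    Real.sqrt
                      (Real.log
                          (({F : Set (EuclideanSpace ℝ (Fin n)) |
                              IsFaceOfDim P F (n - 1)}).ncard) / n) := by
  refine ⟨√2, by positivity, ?_⟩
  rintro n - r hr σ _ hsphere hinv S P rfl hball -
  simpa only [facets, IsFaceOfDim, finrank_euclideanSpace_fin] using
    mean_gauge_of_polytope_general hsphere hinv S.finite_toSet hr hball
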